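/- Let n ≥ 4 and let k_1, k_2, ℓ_2 be integers with n−1 ≥ k_1 > k_2 ≥ 2 and ℓ_2 > 2. Set A_1 = {u ∈ A(k_1,2) : u ≥_lex x_{k_2} x_{k_1+1}} and A_2 = {u ∈ A(k_2,ℓ_2) : u ≥_lex x_{k_2+1}^{ℓ_2}}. Then A_2 \ LexShad^{ℓ_2−2}(A_1) = {x_{k_2+1}^{ℓ_2}}. -/

import Mathlib

namespace ExtremalBetti

/-- A monomial of `K[x_1,…,x_n]`, identified with its exponent vector in `ℕ^n`. -/
abbrev Mon (n : ℕ) := Fin n → ℕ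

/-- The degree of a monomial. -/
def degree {n : ℕ} (u : Mon n) : ℕ := ∑ i, u i

/-- `m(u)`: the (1-based) index of the largest variable dividing `u`; `m(1) = 0`. -/
def maxVar {n : ℕ} (u : Mon n) : ℕ :=
  (Finset.univ.filter (fun i : Fin n => u i ≠ 0)).sup (fun i => (i : ℕ) + 1)

/-- The exponent vector of the variable `x_q` (1-based index `q`). -/
def X (n q : ℕ) : Mon n := fun i => if (i : ℕ) + 1 = q then 1 else 0

/-- `lexLT u v` : `v` is strictly lex-greater than `u` (lex order induced by
`x_1 > x_2 > … > x_n`). -/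
def lexLT {n : ℕ} (u v : Mon n) : Prop :=
  ∃ i : Fin n, (∀ j : Fin n, j < i → u j = v j) ∧ u i < v i

/-- `lexLE u v` : `v ≥_lex u`. -/
def lexLE {n : ℕ} (u v : Mon n) : Prop := u = v ∨ lexLT u v

/-- `L(top, bot)` in degree `d`: monomials `z` of degree `d` with `top ≥_lex z ≥_lex bot`. -/
def Lset {n : ℕ} (d : ℕ) (top bot : Mon n) : Set (Mon n) :=
  {z | degree z = d ∧ lexLE z top ∧ lexLE bot z}

/-- `A(k,d)`: monomials of degree `d` with `m(u) = k+1`. -/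
def A (n k d : ℕ) : Set (Mon n) := {u | degree u = d ∧ maxVar u = k + 1}

/-- The shadow of a set of monomials. -/
def shad {n : ℕ} (Ms : Set (Mon n)) : Set (Mon n) :=
  {z | ∃ u ∈ Ms, ∃ i : Fin n, z = u + Pi.single i 1}

/-- The `t`-fold iterated shadow. -/
def shadIter {n : ℕ} : ℕ → Set (Mon n) → Set (Mon n)
  | 0, Ms => Ms
  | t + 1, Ms => shad (shadIter t Ms)

/-- The lexicographic shadow `LexShad^t(𝔐) = L(x_1^{d+t}, w x_n^t)`, where `w` is the
lex-smallest element of `𝔐` (empty if `𝔐` is empty or has no lex-smallest element). -/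
def lexShad {n : ℕ} (t : ℕ) (Ms : Set (Mon n)) : Set (Mon n) :=
  {z | ∃ w ∈ Ms, (∀ v ∈ Ms, lexLE w v) ∧
      z ∈ Lset (degree w + t) ((degree w + t) • X n 1) (w + t • X n n)}

/-- A set of monomials is a monomial ideal iff it is upward closed under divisibility. -/
def IsMonIdeal {n : ℕ} (I : Set (Mon n)) : Prop :=
  ∀ u ∈ I, ∀ v : Mon n, (∀ i, u i ≤ v i) → v ∈ I

/-- `G(I)`: the minimal monomial generators of `I`. -/
def minGens {n : ℕ} (I : Set (Mon n)) : Set (Mon n) :=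
  {u ∈ I | ∀ v ∈ I, (∀ i, v i ≤ u i) → v = u}

/-- `G(I)_d`: the minimal generators of degree `d`. -/
def gens {n : ℕ} (I : Set (Mon n)) (d : ℕ) : Set (Mon n) :=
  {u ∈ minGens I | degree u = d}

/-- `I` is a strongly stable (monomial) ideal with `I ⊊ S` (i.e. `1 ∉ I`):
for every minimal generator `u`, every `i` with `x_i ∣ u` and every `j < i`,
`(x_j u)/x_i ∈ I`. -/
def StronglyStable {n : ℕ} (I : Set (Mon n)) : Prop :=
  IsMonIdeal I ∧ (0 : Mon n) ∉ I ∧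
    ∀ u ∈ minGens I, ∀ i : Fin n, u i ≠ 0 →
      ∀ j : Fin n, j < i → (u - Pi.single i 1 + Pi.single j 1) ∈ I

/-- The initial degree `α(I)` of the monomial ideal `I` equals `d`. -/
def initialDegree {n : ℕ} (I : Set (Mon n)) (d : ℕ) : Prop :=
  (∃ u ∈ I, degree u = d) ∧ ∀ u ∈ I, d ≤ degree u

/-- `(k,ℓ)` is a corner of `I`: `k, ℓ ≥ 1`, `k + 1 = max{m(u) : u ∈ G(I)_ℓ}`, and
`m(u) ≤ k` for every `u ∈ G(I)_j` with `j > ℓ`. -/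
def IsCorner {n : ℕ} (I : Set (Mon n)) (k ℓ : ℕ) : Prop :=
  1 ≤ k ∧ 1 ≤ ℓ ∧
  (∃ u ∈ gens I ℓ, maxVar u = k + 1) ∧
  (∀ u ∈ gens I ℓ, maxVar u ≤ k + 1) ∧
  (∀ j, ℓ < j → ∀ u ∈ gens I j, maxVar u ≤ k)

/-- The value of the corner `(k,ℓ)`: `|{u ∈ G(I)_ℓ : m(u) = k+1}|`. -/
noncomputable def cornerValue {n : ℕ} (I : Set (Mon n)) (k ℓ : ℕ) : ℕ :=
  {u ∈ gens I ℓ | maxVar u = k + 1}.ncard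

/-- The set of corners of `I`. -/
def corners {n : ℕ} (I : Set (Mon n)) : Set (ℕ × ℕ) :=
  {c | IsCorner I c.1 c.2}

/-- `(k,ℓ)` is a corner of the submodule `M = ⊕_j I_j e_j` of `S^m`. -/
def IsCornerMod {n m : ℕ} (I : Fin m → Set (Mon n)) (k ℓ : ℕ) : Prop :=
  1 ≤ k ∧ 1 ≤ ℓ ∧
  (∃ j, ∃ u ∈ gens (I j) ℓ, maxVar u = k + 1) ∧
  (∀ j, ∀ u ∈ gens (I j) ℓ, maxVar u ≤ k + 1) ∧
  (∀ d, ℓ < d → ∀ j, ∀ u ∈ gens (I j) d, maxVar u ≤ k)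

/-- The value of the corner `(k,ℓ)` of `M = ⊕_j I_j e_j`: the number of minimal
generators `u e_j` with `deg u = ℓ` and `m(u) = k+1`. -/
noncomputable def cornerValueMod {n m : ℕ} (I : Fin m → Set (Mon n)) (k ℓ : ℕ) : ℕ :=
  {p : Mon n × Fin m | p.1 ∈ gens (I p.2) ℓ ∧ maxVar p.1 = k + 1}.ncard

/-- The set of corners of the submodule `M = ⊕_j I_j e_j`. -/
def cornersMod {n m : ℕ} (I : Fin m → Set (Mon n)) : Set (ℕ × ℕ) :=
  {c | IsCornerMod I c.1 c.2}

/-- `t = max{p : λ_p ≤ s − p}` (and `t = 0` if no such `p` exists). -/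
def tVal (s : ℕ) (l : ℕ → ℕ) : ℕ :=
  ((Finset.Icc 1 s).filter (fun p => l p ≤ s - p)).sup id

/-- The associated sets `B_1, …, B_s` of the corner sequence
`(κ_1,λ_1), …, (κ_s,λ_s)` (given by `k, l : ℕ → ℕ` on indices `1,…,s`);
`B_0 = ∅`. -/
def assocB (n s : ℕ) (k l : ℕ → ℕ) (p : ℕ) : Set (Mon n) :=
  if p = 0 then ∅
  else if s = 1 then A n (k 1) (l 1)
  else if p = s then {u ∈ A n (k s) (l s) | lexLE ((l s) • X n (k s + 1)) u}
  else if l 1 = 2 ∧ p = 1 then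
    {u ∈ A n (k 1) 2 |
      lexLE (X n (if s = 2 then k 2 else k s - 1) + X n (k 1 + 1)) u}
  else if p ≤ tVal s l then
    {u ∈ A n (k p) (l p) |
      lexLE ((∑ j ∈ Finset.Icc (s - l p + 3) s, X n (k j)) +
          X n (k (s - l p + 2) - 1) + X n (k p + 1)) u}
  else
    {u ∈ A n (k p) (l p) |
      lexLE ((∑ j ∈ Finset.Icc (p + 1) s, X n (k j)) +
          (l p - (s - p)) • X n (k p + 1)) u}

/-- The admissible bound `b_p = |B_p \ LexShad^{λ_p−λ_{p−1}}(B_{p−1})|` of the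
`p`-th pair of the corner sequence. -/
noncomputable def admissibleBound (n s : ℕ) (k l : ℕ → ℕ) (p : ℕ) : ℕ :=
  (assocB n s k l p \ lexShad (l p - l (p - 1)) (assocB n s k l (p - 1))).ncard


theorem maxVar_eq_of {n : ℕ} (u : Mon n) (q : Fin n) (hq : u q ≠ 0)
    (h : ∀ j : Fin n, q < j → u j = 0) : maxVar u = (q : ℕ) + 1 := by
  unfold maxVar
  apply le_antisymm
  · apply Finset.sup_le
    intro j hj
    have hj' : u j ≠ 0 := by simpa using hj
    by_contra hc
    exact hj' (h j (Fin.lt_def.mpr (by omega)))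
  · exact Finset.le_sup (f := fun i : Fin n => (i : ℕ) + 1) (by simpa using hq)

theorem maxVar_spec {n : ℕ} (u : Mon n) (q : Fin n) (h : maxVar u = (q : ℕ) + 1) :
    u q ≠ 0 ∧ ∀ j : Fin n, q < j → u j = 0 := by
  unfold maxVar at h
  constructor
  · have hne : (Finset.univ.filter (fun i : Fin n => u i ≠ 0)).Nonempty := by
      rw [Finset.nonempty_iff_ne_empty]
      intro he
      rw [he] at h
      simp at h
    obtain ⟨i, hi, hs⟩ := Finset.exists_mem_eq_sup _ hne (fun i : Fin n => (i : ℕ) + 1)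
    rw [hs] at h
    have : i = q := Fin.ext (by simpa using h)
    subst this
    simpa using hi
  · intro j hj
    by_contra hc
    have := Finset.le_sup (f := fun i : Fin n => (i : ℕ) + 1)
      (show j ∈ Finset.univ.filter (fun i : Fin n => u i ≠ 0) by simpa using hc)
    rw [h] at this
    have := Fin.lt_def.mp hj
    simp at *
    omega

theorem degree_add {n : ℕ} (u v : Mon n) : degree (u + v) = degree u + degree v := by
  simp [degree, Finset.sum_add_distrib]

theorem degree_smul {n : ℕ} (t : ℕ) (u : Mon n) : degree (t • u) = t * degree u := by
  simp [degree, Finset.mul_sum]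

theorem degree_X {n : ℕ} (q : Fin n) : degree (X n (q + 1)) = 1 := by
  unfold degree X
  rw [Finset.sum_eq_single q]
  · simp
  · intro b _ hb
    have : (b : ℕ) ≠ q := fun h => hb (Fin.ext h)
    simp [this]
  · simp

/-- Let `n ≥ 4`, `n−1 ≥ k₁ > k₂ ≥ 2`, `ℓ₂ > 2`. With
`A₁ = {u ∈ A(k₁,2) : u ≥_lex x_{k₂} x_{k₁+1}}` and
`A₂ = {u ∈ A(k₂,ℓ₂) : u ≥_lex x_{k₂+1}^{ℓ₂}}`, one has
`A₂ \ LexShad^{ℓ₂−2}(A₁) = {x_{k₂+1}^{ℓ₂}}`. -/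
theorem statement7 (n : ℕ) (hn : 4 ≤ n) (k₁ k₂ ℓ₂ : ℕ)
    (hk1 : k₁ ≤ n - 1) (hk12 : k₂ < k₁) (hk2 : 2 ≤ k₂) (hl2 : 2 < ℓ₂) :
    {u ∈ A n k₂ ℓ₂ | lexLE (ℓ₂ • X n (k₂ + 1)) u} \
        lexShad (ℓ₂ - 2) {u ∈ A n k₁ 2 | lexLE (X n k₂ + X n (k₁ + 1)) u} =
      {ℓ₂ • X n (k₂ + 1)} := by
  have hk2n : k₂ < n := by omega
  have hk1n : k₁ < n := by omega
  have hp : k₂ - 1 < n := by omega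
  have dw : degree (X n k₂ + X n (k₁ + 1)) = 2 := by
    rw [degree_add, degree_X ⟨k₁, hk1n⟩]
    have := degree_X (⟨k₂ - 1, hp⟩ : Fin n)
    simp only [show k₂ - 1 + 1 = k₂ by omega] at this
    omega
  have mw : maxVar (X n k₂ + X n (k₁ + 1)) = k₁ + 1 := by
    refine maxVar_eq_of _ ⟨k₁, hk1n⟩ ?_ ?_
    · simp [X]
    · intro j hj
      have := Fin.lt_def.mp hj
      simp only at this
      simp only [X, Pi.add_apply]
      rw [if_neg (by omega), if_neg (by omega)]
  have dx : degree (ℓ₂ • X n (k₂ + 1)) = ℓ₂ := by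
    rw [degree_smul, degree_X ⟨k₂, hk2n⟩, mul_one]
  have mx : maxVar (ℓ₂ • X n (k₂ + 1)) = k₂ + 1 := by
    refine maxVar_eq_of _ ⟨k₂, hk2n⟩ ?_ ?_
    · simp [X]; omega
    · intro j hj
      have := Fin.lt_def.mp hj
      simp only at this
      simp only [X, Pi.smul_apply]
      rw [if_neg (by omega), smul_zero]
  ext u
  simp only [Set.mem_diff, Set.mem_setOf_eq, Set.mem_singleton_iff]
  constructor
  · rintro ⟨⟨⟨hd, hm⟩, _⟩, hns⟩
    by_contra hne
    apply hns
    obtain ⟨hq, hgt⟩ := maxVar_spec u ⟨k₂, hk2n⟩ hm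
    refine ⟨X n k₂ + X n (k₁ + 1), ⟨⟨dw, mw⟩, Or.inl rfl⟩, fun v hv => hv.2, ?_, ?_, ?_⟩
    · rw [hd, dw]; omega
    · right
      refine ⟨⟨0, by omega⟩, ?_, ?_⟩
      · intro j hj
        exact absurd (Fin.lt_def.mp hj) (by simp)
      · have h2 : u ⟨0, by omega⟩ + u ⟨k₂, hk2n⟩ ≤ degree u := by
          unfold degree
          rw [← Finset.sum_pair (f := u) (a := ⟨0, by omega⟩) (b := ⟨k₂, hk2n⟩)
            (by intro h; have := congrArg Fin.val h; simp at this; omega)]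
          exact Finset.sum_le_sum_of_subset (Finset.subset_univ _)
        rw [dw]
        simp [X]
        omega
    · right
      have hb : ∀ j : Fin n, (j : ℕ) ≤ k₂ →
          (X n k₂ + X n (k₁ + 1) + (ℓ₂ - 2) • X n n) j = if (j : ℕ) + 1 = k₂ then 1 else 0 := by
        intro j hj
        simp only [X, Pi.add_apply, Pi.smul_apply]
        rw [if_neg (show ¬ (j : ℕ) + 1 = k₁ + 1 by omega),
          if_neg (show ¬ (j : ℕ) + 1 = n by omega)]
        simp
      have hex : ∃ m : ℕ, ∃ h : m < n, m < k₂ ∧ u ⟨m, h⟩ ≠ 0 := by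
        by_contra hc
        push Not at hc
        apply hne
        have hz : ∀ j : Fin n, j ≠ ⟨k₂, hk2n⟩ → u j = 0 := by
          intro j hj
          rcases lt_trichotomy (j : ℕ) k₂ with h | h | h
          · exact hc j j.2 h
          · exact absurd (Fin.ext h) hj
          · exact hgt j (Fin.lt_def.mpr h)
        have hu : u ⟨k₂, hk2n⟩ = ℓ₂ := by
          rw [← hd]
          unfold degree
          rw [Finset.sum_eq_single (⟨k₂, hk2n⟩ : Fin n)]
          · intro j _ hj
            exact hz j hj
          · simp
        funext j
        by_cases hj : j = ⟨k₂, hk2n⟩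
        · subst hj
          simp [X, hu]
        · have : (j : ℕ) ≠ k₂ := fun h => hj (Fin.ext h)
          simp [X, hz j hj, this]
      classical
      obtain ⟨hmn, hmk, hm0⟩ := Nat.find_spec hex
      have hmin := fun m => Nat.find_min hex (m := m)
      generalize Nat.find hex = m at *
      have hlow : ∀ j : Fin n, (j : ℕ) < m → u j = 0 := by
        intro j hj
        by_contra h
        exact hmin j hj ⟨j.2, by omega, h⟩
      by_cases h1 : m + 1 = k₂ ∧ u ⟨m, hmn⟩ = 1
      · refine ⟨⟨k₂, hk2n⟩, ?_, ?_⟩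
        · intro j hj
          have hj' : (j : ℕ) < k₂ := Fin.lt_def.mp hj
          rw [hb j (by omega)]
          split_ifs with h
          · have : j = ⟨m, hmn⟩ := Fin.ext (by simp; omega)
            rw [this, h1.2]
          · rw [hlow j (by omega)]
        · rw [hb _ (by simp)]
          simp
          omega
      · refine ⟨⟨m, hmn⟩, ?_, ?_⟩
        · intro j hj
          have hj' : (j : ℕ) < m := Fin.lt_def.mp hj
          rw [hb j (by omega), hlow j hj', if_neg (by omega)]
        · rw [hb _ (by simp; omega)]
          simp only
          split_ifs with h
          · have : u ⟨m, hmn⟩ ≠ 1 := fun h' => h1 ⟨h, h'⟩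
            omega
          · omega
  · rintro rfl
    refine ⟨⟨⟨dx, mx⟩, Or.inl rfl⟩, ?_⟩
    rintro ⟨w, ⟨_, hw⟩, _, _, _, hle⟩
    have hwp : (X n k₂ + X n (k₁ + 1)) ⟨k₂ - 1, hp⟩ ≠ 0 := by
      simp [X]
      omega
    have hex : ∃ p : Fin n, (p : ℕ) < k₂ ∧ w p ≠ 0 := by
      rcases hw with rfl | ⟨i, hi, hlt⟩
      · exact ⟨⟨k₂ - 1, hp⟩, by simp; omega, hwp⟩
      · by_cases h : (i : ℕ) < k₂
        · exact ⟨i, h, by omega⟩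
        · refine ⟨⟨k₂ - 1, hp⟩, by simp; omega, ?_⟩
          rw [← hi _ (Fin.lt_def.mpr (by simp; omega))]
          exact hwp
    obtain ⟨p, hpk, hwp'⟩ := hex
    have hz : ∀ j : Fin n, (j : ℕ) < k₂ → (ℓ₂ • X n (k₂ + 1)) j = 0 := by
      intro j hj
      simp [X]
      omega
    have hneq : (w + (ℓ₂ - 2) • X n n) p ≠ (ℓ₂ • X n (k₂ + 1)) p := by
      rw [hz p hpk, Pi.add_apply]
      omega
    rcases hle with h | ⟨i, hi, hlt⟩
    · exact hneq (congrFun h p)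
    · by_cases h : (i : ℕ) < k₂
      · rw [hz i h] at hlt
        omega
      · exact hneq (hi p (Fin.lt_def.mpr (by omega)))

end ExtremalBetti
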